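/- Let d ≥ 3 and let k be an integer with d/2 < k < d, and p, q ∈ ℝ. The map L^{(d)}_{p,q} is k-positive if and only if p − (d−1)q ≤ 1, p + (d+1)q ≤ 1, (kd−1)p + (d−1)q ≥ −1, and f_k(p,q) ≤ 0, where f_k(x,y) = (kd−1)x² − (d³ − kd² − kd − d + 2)xy + (d−1)y² − (kd−2)x − (d−2)y − 1. -/

import Mathlib

set_option linter.unusedSectionVars false

open Matrix
open scoped ComplexOrder

noncomputable section

/-- The ampliation `id_{M_k} ⊗ L` of a map `L` applied to a bipartite matrix, blockwise. -/
def idTensor {k m n : ℕ} (L : Matrix (Fin m) (Fin m) ℂ →ₗ[ℂ] Matrix (Fin n) (Fin n) ℂ)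
    (X : Matrix (Fin k × Fin m) (Fin k × Fin m) ℂ) : Matrix (Fin k × Fin n) (Fin k × Fin n) ℂ :=
  Matrix.of fun p q => L (Matrix.of fun a b => X (p.1, a) (q.1, b)) p.2 q.2

/-- `L` is `k`-positive if `id_{M_k} ⊗ L` sends positive semidefinite matrices to positive
semidefinite matrices. -/
def IsKPositive {m n : ℕ} (k : ℕ)
    (L : Matrix (Fin m) (Fin m) ℂ →ₗ[ℂ] Matrix (Fin n) (Fin n) ℂ) : Prop :=
  ∀ X : Matrix (Fin k × Fin m) (Fin k × Fin m) ℂ, X.PosSemidef → (idTensor L X).PosSemidef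

/-- The linear map `L^{(d)}_{p,q}(Z) = (1-p-q) (Tr Z / d) I_d + p Z + q Zᵀ`. -/
def Lmap (d : ℕ) (p q : ℝ) :
    Matrix (Fin d) (Fin d) ℂ →ₗ[ℂ] Matrix (Fin d) (Fin d) ℂ :=
  ((((1 - p - q : ℝ) : ℂ) / (d : ℂ)) •
      (Matrix.traceLinearMap (Fin d) ℂ ℂ).smulRight (1 : Matrix (Fin d) (Fin d) ℂ))
    + ((p : ℝ) : ℂ) • LinearMap.id
    + ((q : ℝ) : ℂ) • (Matrix.transposeLinearEquiv (Fin d) (Fin d) ℂ ℂ).toLinearMap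

/-- The maximally entangled vector `|Ω_d⟩ = (1/√d) ∑_j |jj⟩`. -/
def omegaVec (d : ℕ) : Fin d × Fin d → ℂ :=
  fun p => if p.1 = p.2 then ((1 / Real.sqrt d : ℝ) : ℂ) else 0

/-- The flip operator `F_d = ∑_{i,j} |ij⟩⟨ji|`. -/
def flipMatrix (d : ℕ) : Matrix (Fin d × Fin d) (Fin d × Fin d) ℂ :=
  Matrix.of fun p q => if p.1 = q.2 ∧ p.2 = q.1 then 1 else 0

/-- The orthogonally invariant operators
`ρ^{(d)}_{a,b} = ((1-a-b)/d²) I + a |Ω_d⟩⟨Ω_d| + (b/d) F_d`. -/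
def rho (d : ℕ) (a b : ℝ) : Matrix (Fin d × Fin d) (Fin d × Fin d) ℂ :=
  ((((1 - a - b : ℝ) : ℂ) / ((d : ℂ) ^ 2)) • (1 : Matrix (Fin d × Fin d) (Fin d × Fin d) ℂ))
    + (((a : ℝ) : ℂ) • Matrix.vecMulVec (omegaVec d) (star (omegaVec d)))
    + ((((b : ℝ) : ℂ) / (d : ℂ)) • flipMatrix d)

/-- `Sch_k`: finite sums of rank-one operators `|ξ⟩⟨ξ|` with Schmidt rank `SR(ξ) ≤ k`,
where `SR(ξ)` is the rank of the `d_A × d_B` coefficient matrix of `ξ ∈ ℂ^{d_A} ⊗ ℂ^{d_B}`. -/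
def SchmidtSet (dA dB k : ℕ) : Set (Matrix (Fin dA × Fin dB) (Fin dA × Fin dB) ℂ) :=
  {X | ∃ (N : ℕ) (ξ : Fin N → (Fin dA × Fin dB → ℂ)),
    (∀ i, (Matrix.of fun a b => ξ i (a, b)).rank ≤ k) ∧
    X = ∑ i, Matrix.vecMulVec (ξ i) (star (ξ i))}

/-- The sesquilinear form `c Tr(XᴴY) + q Tr(X̄ Y)`. -/
def EF {d : ℕ} (c q : ℝ) (X Y : Matrix (Fin d) (Fin d) ℂ) : ℂ :=
  (c : ℂ) * (Xᴴ * Y).trace + (q : ℂ) * (Xᵀᴴ * Y).trace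

/-- The full quadratic form. -/
def FF {d : ℕ} (c q p : ℝ) (M : Matrix (Fin d) (Fin d) ℂ) : ℂ :=
  EF c q M M + (p : ℂ) * (star M.trace * M.trace)

lemma idTensor_Lmap_apply {d k : ℕ} (p q : ℝ) (X : Matrix (Fin k × Fin d) (Fin k × Fin d) ℂ)
    (i j : Fin k) (a b : Fin d) :
    idTensor (Lmap d p q) X (i, a) (j, b) =
      (((1 - p - q) / d : ℝ) : ℂ) * ((∑ e, X (i, e) (j, e)) * (if a = b then 1 else 0))
        + (p : ℂ) * X (i, a) (j, b) + (q : ℂ) * X (i, b) (j, a) := by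
  simp [idTensor, Lmap, Matrix.trace, Matrix.one_apply]

lemma idTensor_Lmap_isHermitian {d k : ℕ} (p q : ℝ)
    (X : Matrix (Fin k × Fin d) (Fin k × Fin d) ℂ) (hX : X.IsHermitian) :
    (idTensor (Lmap d p q) X).IsHermitian := by
  ext ⟨i, a⟩ ⟨j, b⟩
  rw [Matrix.conjTranspose_apply, idTensor_Lmap_apply, idTensor_Lmap_apply]
  have h : ∀ x y, star (X x y) = X y x := fun x y => hX.apply y x
  have h1 : (if b = a then (1 : ℂ) else 0) = if a = b then 1 else 0 := by simp [eq_comm]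
  simp only [star_add, star_mul', star_sum, h]
  rw [h1]
  have h2 : star (if a = b then (1 : ℂ) else 0) = if a = b then 1 else 0 := by split_ifs <;> simp
  rw [h2]
  simp

lemma form_eq {d k : ℕ} (p q : ℝ) (A B : Matrix (Fin k) (Fin d) ℂ) :
    star (fun x : Fin k × Fin d => B x.1 x.2) ⬝ᵥ
      ((idTensor (Lmap d p q) (Matrix.vecMulVec (fun x => A x.1 x.2)
        (star (fun x : Fin k × Fin d => A x.1 x.2)))) *ᵥ (fun x => B x.1 x.2)) =
      FF ((1 - p - q) / d) q p (Aᴴ * B) := by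
  have hE : ∀ x y, idTensor (Lmap d p q) (Matrix.vecMulVec (fun x => A x.1 x.2)
        (star (fun x : Fin k × Fin d => A x.1 x.2))) x y =
      (((1 - p - q) / d : ℝ) : ℂ) * ((∑ e, A x.1 e * star (A y.1 e)) * (if x.2 = y.2 then 1 else 0))
        + (p : ℂ) * (A x.1 x.2 * star (A y.1 y.2)) + (q : ℂ) * (A x.1 y.2 * star (A y.1 x.2)) := by
    rintro ⟨i, a⟩ ⟨j, b⟩
    rw [idTensor_Lmap_apply]
    simp [Matrix.vecMulVec_apply]
  generalize ((1 - p - q) / d : ℝ) = c at *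
  simp only [dotProduct, mulVec, hE, Fintype.sum_prod_type, Pi.star_apply]
  have h1 : ((Aᴴ * B)ᴴ * (Aᴴ * B)).trace =
      ∑ i, ∑ a, star (B i a) * ∑ j, ∑ b,
        ((∑ e, A i e * star (A j e)) * (if a = b then 1 else 0)) * B j b := by
    have : ((Aᴴ * B)ᴴ * (Aᴴ * B)) = Bᴴ * ((A * Aᴴ) * B) := by
      simp [Matrix.conjTranspose_mul, Matrix.mul_assoc]
    rw [this]
    simp only [Matrix.trace, Matrix.diag_apply, Matrix.mul_apply (M := Bᴴ),
      Matrix.mul_apply (M := A * Aᴴ), Matrix.mul_apply (M := A), Matrix.conjTranspose_apply]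
    rw [Finset.sum_comm]
    simp
  have h2 : ((Aᴴ * B)ᵀᴴ * (Aᴴ * B)).trace =
      ∑ i, ∑ a, star (B i a) * ∑ j, ∑ b, (A i b * star (A j a)) * B j b := by
    simp only [Matrix.trace, Matrix.diag_apply, Matrix.mul_apply, Matrix.conjTranspose_apply,
      Matrix.transpose_apply, star_sum, star_mul', star_star]
    simp only [Finset.mul_sum, Finset.sum_mul]
    rw [show (∑ i, ∑ a, ∑ j, ∑ b, star (B i a) * ((A i b * star (A j a)) * B j b)) =
      ∑ a, ∑ b, ∑ j, ∑ i, star (B i a) * ((A i b * star (A j a)) * B j b) from ?_]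
    · rw [Finset.sum_comm]
      refine Finset.sum_congr rfl fun a _ => Finset.sum_congr rfl fun b _ =>
        Finset.sum_congr rfl fun j _ => Finset.sum_congr rfl fun i _ => ?_
      ring
    · rw [Finset.sum_comm]
      refine Finset.sum_congr rfl fun a _ => ?_
      rw [Finset.sum_comm]
      rw [Finset.sum_comm' (t' := Finset.univ) (s' := fun _ => Finset.univ) (by simp)]
      rw [show (∑ y, ∑ x, ∑ x_1, star (B y a) * (A y x_1 * star (A x a) * B x x_1)) =
        ∑ y, ∑ x_1, ∑ x, star (B y a) * (A y x_1 * star (A x a) * B x x_1) from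
        Finset.sum_congr rfl fun _ _ => Finset.sum_comm]
      rw [Finset.sum_comm]
      exact Finset.sum_congr rfl fun _ _ => Finset.sum_comm
  have h3 : star (Aᴴ * B).trace * (Aᴴ * B).trace =
      ∑ i, ∑ a, star (B i a) * ∑ j, ∑ b, (A i a * star (A j b)) * B j b := by
    have ht : (Aᴴ * B).trace = ∑ j, ∑ b, star (A j b) * B j b := by
      simp only [Matrix.trace, Matrix.diag_apply, Matrix.mul_apply, Matrix.conjTranspose_apply]
      rw [Finset.sum_comm]
    rw [ht]
    simp only [star_sum, star_mul', star_star, Finset.sum_mul]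
    refine Finset.sum_congr rfl fun i _ => Finset.sum_congr rfl fun a _ => ?_
    simp only [Finset.mul_sum]
    refine Finset.sum_congr rfl fun j _ => Finset.sum_congr rfl fun b _ => ?_
    ring
  rw [FF, EF, h1, h2, h3]
  simp only [Finset.mul_sum, ← Finset.sum_add_distrib]
  refine Finset.sum_congr rfl fun i _ => Finset.sum_congr rfl fun a _ =>
    Finset.sum_congr rfl fun j _ => Finset.sum_congr rfl fun b _ => ?_
  ring

lemma EF_self_nonneg {d : ℕ} {c q : ℝ} (h1 : 0 ≤ c + q) (h2 : 0 ≤ c - q)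
    (X : Matrix (Fin d) (Fin d) ℂ) : 0 ≤ EF c q X X := by
  have hs : (Xᵀᴴ * Xᵀ).trace = (Xᴴ * X).trace := by
    rw [← Matrix.trace_transpose, Matrix.transpose_mul, Matrix.transpose_transpose,
      Matrix.trace_mul_comm]
    rfl
  have hs2 : (Xᴴ * Xᵀ).trace = (Xᵀᴴ * X).trace := by
    rw [← Matrix.trace_transpose, Matrix.transpose_mul, Matrix.transpose_transpose,
      Matrix.trace_mul_comm]
    rfl
  have hp : ∀ Y : Matrix (Fin d) (Fin d) ℂ, 0 ≤ (Yᴴ * Y).trace := fun Y =>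
    (Matrix.posSemidef_conjTranspose_mul_self Y).trace_nonneg
  have e : EF c q X X = (((c + q) / 4 : ℝ) : ℂ) * ((X + Xᵀ)ᴴ * (X + Xᵀ)).trace
      + (((c - q) / 4 : ℝ) : ℂ) * ((X - Xᵀ)ᴴ * (X - Xᵀ)).trace := by
    simp only [Matrix.conjTranspose_add, Matrix.conjTranspose_sub, Matrix.add_mul, Matrix.mul_add,
      Matrix.sub_mul, Matrix.mul_sub, Matrix.trace_add, Matrix.trace_sub, hs, hs2, EF]
    push_cast
    ring
  rw [e]
  have a1 : (0 : ℂ) ≤ (((c + q) / 4 : ℝ) : ℂ) := by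
    rw [Complex.zero_le_real]; linarith
  have a2 : (0 : ℂ) ≤ (((c - q) / 4 : ℝ) : ℂ) := by
    rw [Complex.zero_le_real]; linarith
  exact add_nonneg (mul_nonneg a1 (hp _)) (mul_nonneg a2 (hp _))

lemma exists_proj {d k : ℕ} (B : Matrix (Fin k) (Fin d) ℂ) :
    ∃ (P : Matrix (Fin d) (Fin d) ℂ) (r : ℕ), Pᴴ = P ∧ P * P = P ∧ B * P = B ∧
      P.trace = r ∧ r ≤ k := by
  have hH : (Bᴴ * B).IsHermitian := Matrix.isHermitian_conjTranspose_mul_self B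
  set U : Matrix (Fin d) (Fin d) ℂ := (hH.eigenvectorUnitary : Matrix (Fin d) (Fin d) ℂ) with hU
  have hU1 : Uᴴ * U = 1 := by
    have := Unitary.coe_star_mul_self hH.eigenvectorUnitary
    simpa [Matrix.star_eq_conjTranspose] using this
  have hU2 : U * Uᴴ = 1 := by
    have := Unitary.coe_mul_star_self hH.eigenvectorUnitary
    simpa [Matrix.star_eq_conjTranspose] using this
  have hspec : Bᴴ * B = U * Matrix.diagonal (fun i => (hH.eigenvalues i : ℂ)) * Uᴴ := by
    conv_lhs => rw [hH.spectral_theorem]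
    rw [Unitary.conjStarAlgAut_apply]
    rfl
  set D : Matrix (Fin d) (Fin d) ℂ :=
    Matrix.diagonal (fun i => if hH.eigenvalues i ≠ 0 then (1 : ℂ) else 0) with hD
  have hDD : D * D = D := by
    rw [hD, Matrix.diagonal_mul_diagonal]
    congr 1; ext i; split_ifs <;> simp
  have hDH : Dᴴ = D := by
    rw [hD, Matrix.diagonal_conjTranspose]
    congr 1; ext i; simp only [Pi.star_apply]; split_ifs <;> simp
  have mid : ∀ X Y : Matrix (Fin d) (Fin d) ℂ, U * X * Uᴴ * (U * Y * Uᴴ) = U * (X * Y) * Uᴴ := by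
    intro X Y
    calc U * X * Uᴴ * (U * Y * Uᴴ) = U * X * (Uᴴ * U) * Y * Uᴴ := by simp only [Matrix.mul_assoc]
      _ = _ := by rw [hU1]; simp only [Matrix.mul_assoc, Matrix.one_mul]
  refine ⟨U * D * Uᴴ, (Bᴴ * B).rank, ?_, ?_, ?_, ?_, ?_⟩
  · simp [Matrix.conjTranspose_mul, hDH, Matrix.mul_assoc]
  · rw [mid, hDD]
  · have h0 : Bᴴ * B * (1 - U * D * Uᴴ) = 0 := by
      rw [Matrix.mul_sub, Matrix.mul_one, hspec, mid, hD, Matrix.diagonal_mul_diagonal]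
      rw [sub_eq_zero]
      congr 3; ext i
      by_cases h : hH.eigenvalues i = 0 <;> simp [h]
    rw [Matrix.conjTranspose_mul_self_mul_eq_zero] at h0
    rw [Matrix.mul_sub, Matrix.mul_one, sub_eq_zero] at h0
    exact h0.symm
  · rw [Matrix.trace_mul_comm, ← Matrix.mul_assoc, hU1, Matrix.one_mul, hH.rank_eq_card_non_zero_eigs,
      hD, Matrix.trace_diagonal, Finset.sum_boole, Fintype.card_subtype]
  · exact (Matrix.rank_conjTranspose_mul_self B).le.trans (by simpa using B.rank_le_height)

lemma EF_sub_smul {d : ℕ} (c q : ℝ) (u : ℝ) (t : ℂ) (M W : Matrix (Fin d) (Fin d) ℂ) :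
    EF c q ((u : ℂ) • M - t • W) ((u : ℂ) • M - t • W) =
      (u : ℂ) ^ 2 * EF c q M M - u * t * EF c q M W - u * star t * EF c q W M
        + star t * t * EF c q W W := by
  simp [EF, Matrix.sub_mul, Matrix.mul_sub, Matrix.trace_sub, Matrix.conjTranspose_smul,
    Matrix.transpose_smul, Matrix.trace_smul]
  ring

lemma EF_star {d : ℕ} (c q : ℝ) (X Y : Matrix (Fin d) (Fin d) ℂ) :
    star (EF c q X Y) = EF c q Y X := by
  have h1 : star (Xᴴ * Y).trace = (Yᴴ * X).trace := by
    rw [← Matrix.trace_conjTranspose]; simp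
  have h2 : star (Xᵀᴴ * Y).trace = (Yᵀᴴ * X).trace := by
    rw [← Matrix.trace_conjTranspose, Matrix.conjTranspose_mul, Matrix.conjTranspose_conjTranspose,
      ← Matrix.trace_transpose, Matrix.transpose_mul, Matrix.transpose_transpose,
      Matrix.trace_mul_comm]
    rfl
  simp only [EF, star_add, star_mul', h1, h2]
  simp

lemma EF_W {d : ℕ} (c q : ℝ) (P M W : Matrix (Fin d) (Fin d) ℂ) (hP : Pᴴ = P) (hPP : P * P = P)
    (hM : M * P = M) (hW : W = ((c + q : ℝ) : ℂ) • P - (q : ℂ) • (Pᵀ * P)) :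
    EF c q W M = ((c * (c + q) : ℝ) : ℂ) * M.trace := by
  have hk : (c : ℂ) • W + (q : ℂ) • (Wᵀ * P) = ((c * (c + q) : ℝ) : ℂ) • P := by
    have : Wᵀ * P = (c : ℂ) • (Pᵀ * P) := by
      rw [hW]
      simp [Matrix.transpose_sub, Matrix.transpose_smul, Matrix.sub_mul, Matrix.mul_assoc, hPP]
      module
    rw [this, hW]
    push_cast
    module
  have h1 : (Wᵀᴴ * M).trace = ((Wᵀ * P)ᴴ * M).trace := by
    rw [Matrix.conjTranspose_mul, hP, Matrix.mul_assoc, Matrix.trace_mul_comm P, Matrix.mul_assoc,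
      hM]
  have h2 : EF c q W M = (((c : ℂ) • W + (q : ℂ) • (Wᵀ * P))ᴴ * M).trace := by
    rw [EF, h1]
    simp only [Matrix.conjTranspose_add, Matrix.conjTranspose_smul, Matrix.add_mul,
      Matrix.smul_mul, Matrix.trace_add, Matrix.trace_smul]
    simp
  rw [h2, hk, Matrix.conjTranspose_smul, hP, Matrix.smul_mul, Matrix.trace_smul,
    Matrix.trace_mul_comm, hM]
  simp

/-- Key inequality. -/
lemma key {d k : ℕ} (hd : 0 < d) (hk : 0 < k) (c q : ℝ) (hq : 0 ≤ q) (hcq : q ≤ c)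
    (hc : 0 < c)
    (A B : Matrix (Fin k) (Fin d) ℂ) :
    c * (c + q) * Complex.normSq (Aᴴ * B).trace ≤
      (d * q + k * (c - q)) * (EF c q (Aᴴ * B) (Aᴴ * B)).re := by
  obtain ⟨P, r, hP, hPP, hBP, htr, hr⟩ := exists_proj B
  set M := Aᴴ * B with hMdef
  have hM : M * P = M := by rw [hMdef, Matrix.mul_assoc, hBP]
  set W : Matrix (Fin d) (Fin d) ℂ := ((c + q : ℝ) : ℂ) • P - (q : ℂ) • (Pᵀ * P) with hW
  have hWP : W * P = W := by
    rw [hW]; simp [Matrix.sub_mul, Matrix.mul_assoc, hPP]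
  have e1 := EF_W c q P M W hP hPP hM hW
  have e2 := EF_W c q P W W hP hPP hWP hW
  have e3 : EF c q M W = ((c * (c + q) : ℝ) : ℂ) * star M.trace := by
    rw [← EF_star, e1]; simp
  have hG : 0 ≤ ((1 - P)ᵀ * (1 - P)).trace := by
    have hQ : (1 - P)ᴴ = 1 - P := by simp [hP]
    have hQQ : (1 - P) * (1 - P) = 1 - P := by
      simp [Matrix.sub_mul, Matrix.mul_sub, hPP]
    have : ((1 - P)ᵀ * (1 - P)).trace =
        (((1 - P) * (1 - P)ᵀ)ᴴ * ((1 - P) * (1 - P)ᵀ)).trace := by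
      have h1 : (1 - P)ᵀᴴ = (1 - P)ᵀ := by
        rw [show (1 - P)ᵀᴴ = (1 - P)ᴴᵀ from rfl, hQ]
      have h2 : (1 - P)ᵀ * (1 - P)ᵀ = (1 - P)ᵀ := by rw [← Matrix.transpose_mul, hQQ]
      rw [Matrix.conjTranspose_mul, h1, hQ, ← Matrix.mul_assoc, Matrix.mul_assoc _ (1 - P) (1 - P),
        hQQ, Matrix.trace_mul_comm ((1 - P)ᵀ * (1 - P)), ← Matrix.mul_assoc, h2]
    rw [this]
    exact (Matrix.posSemidef_conjTranspose_mul_self _).trace_nonneg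
  have hG2 : ((1 - P)ᵀ * (1 - P)).trace = (d : ℂ) - 2 * r + (Pᵀ * P).trace := by
    simp [Matrix.sub_mul, Matrix.mul_sub, htr, Matrix.transpose_sub]
    ring
  have hre : 0 ≤ (d : ℝ) - 2 * r + (Pᵀ * P).trace.re := by
    rw [hG2] at hG
    have := (Complex.le_def.1 hG).1
    simpa using this
  have hWtr : W.trace.re = (c + q) * r - q * (Pᵀ * P).trace.re := by
    rw [hW, Matrix.trace_sub, Matrix.trace_smul, Matrix.trace_smul, htr]
    simp
  set u : ℝ := d * q + k * (c - q) with hu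
  have hwu : W.trace.re ≤ u := by
    have hr' : (r : ℝ) ≤ k := by exact_mod_cast hr
    rw [hWtr, hu]
    nlinarith [mul_nonneg hq hre, mul_nonneg (sub_nonneg.2 hcq) (sub_nonneg.2 hr')]
  have hupos : 0 < u := by
    have h1 : (0 : ℝ) < d := by exact_mod_cast hd
    have h2 : (0 : ℝ) < k := by exact_mod_cast hk
    rw [hu]
    rcases hq.eq_or_lt with h | h
    · subst h
      nlinarith [mul_pos h2 hc]
    · nlinarith [mul_pos h1 h, mul_nonneg h2.le (sub_nonneg.2 hcq)]
  have hn := EF_self_nonneg (c := c) (q := q) (by linarith) (by linarith)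
    ((u : ℂ) • M - M.trace • W)
  rw [EF_sub_smul, e1, e2, e3] at hn
  have hn2 := (Complex.le_def.1 hn).1
  have hns : star M.trace * M.trace = ((Complex.normSq M.trace : ℝ) : ℂ) := by
    rw [Complex.normSq_eq_conj_mul_self]; rfl
  have e5 : (u : ℂ) ^ 2 * EF c q M M - u * M.trace * (((c * (c + q) : ℝ) : ℂ) * star M.trace)
      - u * star M.trace * (((c * (c + q) : ℝ) : ℂ) * M.trace)
      + star M.trace * M.trace * (((c * (c + q) : ℝ) : ℂ) * W.trace) =
      ((u ^ 2 : ℝ) : ℂ) * EF c q M M - ((2 * u * (c * (c + q)) * Complex.normSq M.trace : ℝ) : ℂ)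
      + ((Complex.normSq M.trace * (c * (c + q)) : ℝ) : ℂ) * W.trace := by
    push_cast
    rw [← hns]
    ring
  rw [e5, Complex.add_re, Complex.sub_re, Complex.re_ofReal_mul, Complex.re_ofReal_mul,
    Complex.ofReal_re, Complex.zero_re] at hn2
  have hκ : 0 ≤ Complex.normSq M.trace * (c * (c + q)) :=
    mul_nonneg (Complex.normSq_nonneg _) (by nlinarith)
  have := mul_le_mul_of_nonneg_left hwu hκ
  have h6 : 0 ≤ u * (u * (EF c q M M).re - c * (c + q) * Complex.normSq M.trace) := by
    nlinarith
  have := nonneg_of_mul_nonneg_right h6 hupos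
  linarith

lemma FF_eq {d : ℕ} (c q p : ℝ) (M : Matrix (Fin d) (Fin d) ℂ) :
    FF c q p M = (((EF c q M M).re + p * Complex.normSq M.trace : ℝ) : ℂ) := by
  have h1 : EF c q M M = (((EF c q M M).re : ℝ) : ℂ) := by
    have := EF_star c q M M
    exact (Complex.conj_eq_iff_re.1 this).symm
  have h2 : star M.trace * M.trace = ((Complex.normSq M.trace : ℝ) : ℂ) := by
    rw [Complex.normSq_eq_conj_mul_self]; rfl
  rw [FF, h2]
  conv_lhs => rw [h1]
  push_cast
  ring

lemma kpos_iff {d k : ℕ} (p q : ℝ) :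
    IsKPositive k (Lmap d p q) ↔
      ∀ A B : Matrix (Fin k) (Fin d) ℂ, 0 ≤ FF ((1 - p - q) / d) q p (Aᴴ * B) := by
  constructor
  · intro h A B
    rw [← form_eq]
    exact (h _ (Matrix.posSemidef_vecMulVec_self_star _)).dotProduct_mulVec_nonneg _
  · intro h X hX
    have hX2 : ∃ C : Matrix (Fin k × Fin d) (Fin k × Fin d) ℂ, X = Cᴴ * C := by
      open scoped MatrixOrder in
      have h0 : 0 ≤ X := hX.nonneg
      rw [CStarAlgebra.nonneg_iff_eq_star_mul_self] at h0
      exact h0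
    obtain ⟨C, hC⟩ := hX2
    have hsum : idTensor (Lmap d p q) X = ∑ z, idTensor (Lmap d p q)
        (Matrix.vecMulVec (fun x => star (C z x)) (star (fun x => star (C z x)))) := by
      have hx : X = ∑ z, Matrix.vecMulVec (fun x => star (C z x)) (star (fun x => star (C z x))) := by
        rw [hC]
        ext x y
        simp [Matrix.mul_apply, Matrix.sum_apply, Matrix.vecMulVec_apply]
      conv_lhs => rw [hx]
      ext ⟨i, a⟩ ⟨j, b⟩
      simp only [Matrix.sum_apply, idTensor_Lmap_apply, Finset.sum_add_distrib, ← Finset.mul_sum,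
        ← Finset.sum_mul]
      rw [Finset.sum_comm]
    rw [hsum]
    refine Matrix.posSemidef_sum _ fun z _ => ?_
    refine .of_dotProduct_mulVec_nonneg
      (idTensor_Lmap_isHermitian _ _ _ (Matrix.posSemidef_vecMulVec_self_star _).1) fun v => ?_
    have := h (Matrix.of fun i a => star (C z (i, a))) (Matrix.of fun i a => v (i, a))
    rw [← form_eq] at this
    exact this

lemma suff {d k : ℕ} (hd : 0 < d) (hk : 0 < k) (c q p : ℝ) (h1 : 0 ≤ c + q) (h2 : 0 ≤ c - q)
    (h3 : 0 ≤ c + q + k * p) (h4 : 0 ≤ c * (c + q) + p * (d * q + k * (c - q)))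
    (A B : Matrix (Fin k) (Fin d) ℂ) : 0 ≤ FF c q p (Aᴴ * B) := by
  rw [FF_eq, Complex.zero_le_real]
  set M := Aᴴ * B with hM
  have hE : 0 ≤ (EF c q M M).re := by
    simpa using (Complex.le_def.1 (EF_self_nonneg h1 h2 M)).1
  have hN := Complex.normSq_nonneg M.trace
  rcases le_or_gt 0 p with hp | hp
  · positivity
  rcases lt_or_ge 0 q with hq | hq
  · have hc : 0 < c := by linarith
    have hk := key hd hk c q hq.le (by linarith) hc A B
    rw [← hM] at hk
    have hκ : 0 < c * (c + q) := by positivity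
    have h5 : 0 ≤ c * (c + q) * ((EF c q M M).re + p * Complex.normSq M.trace) := by
      nlinarith [mul_nonneg h4 hE, mul_le_mul_of_nonpos_left hk hp.le]
    exact nonneg_of_mul_nonneg_right h5 hκ
  · have hk := key hd hk 1 0 le_rfl zero_le_one one_pos A B
    rw [← hM] at hk
    have hd1 := EF_self_nonneg (c := -q) (q := q) (by linarith) (by linarith) M
    have hd2 : EF c q M M = EF (-q) q M M + ((c + q : ℝ) : ℂ) * EF 1 0 M M := by
      simp only [EF]; push_cast; ring
    have hd3 : 0 ≤ (EF (-q) q M M).re := by simpa using (Complex.le_def.1 hd1).1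
    have hd4 : 0 ≤ (EF 1 0 M M).re := by
      simpa using (Complex.le_def.1 (EF_self_nonneg (c := 1) (q := 0) (by simp) (by simp) M)).1
    rw [hd2, Complex.add_re, Complex.re_ofReal_mul]
    nlinarith [mul_nonneg h3 hd4, mul_le_mul_of_nonpos_left hk hp.le]

lemma FF_gram {d k : ℕ} (c q p : ℝ) (A B : Matrix (Fin k) (Fin d) ℂ) :
    FF c q p (Aᴴ * B) = c * (A * Aᴴ * (B * Bᴴ)).trace + q * (B * Aᵀ * (A * Bᵀ)ᴴ).trace
      + p * (star (B * Aᴴ).trace * (B * Aᴴ).trace) := by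
  have h1 : ((Aᴴ * B)ᴴ * (Aᴴ * B)).trace = (A * Aᴴ * (B * Bᴴ)).trace := by
    rw [Matrix.conjTranspose_mul, Matrix.conjTranspose_conjTranspose, Matrix.mul_assoc,
      Matrix.trace_mul_comm]
    simp only [Matrix.mul_assoc]
  have h2 : ((Aᴴ * B)ᵀᴴ * (Aᴴ * B)).trace = (B * Aᵀ * (A * Bᵀ)ᴴ).trace := by
    have : (Aᴴ * B)ᵀᴴ = Aᵀ * Bᵀᴴ := by
      rw [Matrix.transpose_mul, Matrix.conjTranspose_mul]
      congr 1
      ext i j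
      simp
    rw [this, ← Matrix.mul_assoc, Matrix.trace_mul_comm, Matrix.conjTranspose_mul]
    simp only [Matrix.mul_assoc]
  rw [FF, EF, h1, h2, Matrix.trace_mul_comm Aᴴ]

lemma FF_diag {d k : ℕ} (c q p : ℝ) (A : Matrix (Fin k) (Fin d) ℂ) (n m s : Fin k → ℝ)
    (hn : A * Aᴴ = Matrix.diagonal fun j => (n j : ℂ))
    (hm : A * Aᵀ = Matrix.diagonal fun j => (m j : ℂ)) :
    FF c q p (Aᴴ * (Matrix.diagonal (fun j => (s j : ℂ)) * A)) =
      ((c * ∑ j, n j ^ 2 * s j ^ 2 + q * ∑ j, m j ^ 2 * s j ^ 2 + p * (∑ j, s j * n j) ^ 2 : ℝ) : ℂ)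
      := by
  rw [FF_gram]
  have hs : (Matrix.diagonal (fun j => (s j : ℂ)))ᴴ = Matrix.diagonal (fun j => (s j : ℂ)) := by
    rw [Matrix.diagonal_conjTranspose]; congr 1; ext j; simp
  have e1 : Matrix.diagonal (fun j => (s j : ℂ)) * A * (Matrix.diagonal (fun j => (s j : ℂ)) * A)ᴴ
      = Matrix.diagonal (fun j => (s j : ℂ)) * (A * Aᴴ) * Matrix.diagonal (fun j => (s j : ℂ)) := by
    rw [Matrix.conjTranspose_mul, hs]; simp only [Matrix.mul_assoc]
  have e2 : A * (Matrix.diagonal (fun j => (s j : ℂ)) * A)ᵀ =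
      A * Aᵀ * Matrix.diagonal (fun j => (s j : ℂ)) := by
    rw [Matrix.transpose_mul, Matrix.diagonal_transpose, Matrix.mul_assoc]
  rw [e1, e2, Matrix.mul_assoc _ A, Matrix.mul_assoc _ A, hn, hm]
  simp only [Matrix.diagonal_mul_diagonal, Matrix.diagonal_conjTranspose, Matrix.trace_diagonal,
    Pi.star_apply, star_sum, star_mul']
  push_cast
  simp only [Complex.star_def, Complex.conj_ofReal]
  have a1 : ∀ j, (n j : ℂ) * ((s j : ℂ) * n j * s j) = (n j : ℂ) ^ 2 * (s j : ℂ) ^ 2 := fun j => by ring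
  have a2 : ∀ j, (s j : ℂ) * m j * ((m j : ℂ) * s j) = (m j : ℂ) ^ 2 * (s j : ℂ) ^ 2 := fun j => by ring
  simp only [a1, a2]
  ring

/-- Test matrix `A₁`: row `j` is `e_{t+j}` (zero if out of range). -/
def shiftM (k d t : ℕ) : Matrix (Fin k) (Fin d) ℂ :=
  Matrix.of fun j a => if (a : ℕ) = t + j then 1 else 0

lemma shiftM_conj (k d t : ℕ) : (shiftM k d t)ᴴ = (shiftM k d t)ᵀ := by
  ext a j
  simp only [shiftM, Matrix.conjTranspose_apply, Matrix.transpose_apply, Matrix.of_apply]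
  split_ifs <;> simp

lemma shiftM_self (k d t : ℕ) : shiftM k d t * (shiftM k d t)ᵀ =
    Matrix.diagonal fun j : Fin k => (((if t + (j : ℕ) < d then 1 else 0 : ℝ)) : ℂ) := by
  ext i j
  simp only [shiftM, Matrix.mul_apply, Matrix.transpose_apply, Matrix.of_apply,
    Matrix.diagonal_apply]
  by_cases hij : i = j
  · subst hij
    by_cases h : t + (i : ℕ) < d
    · rw [Finset.sum_eq_single ⟨t + i, h⟩]
      · simp [h]
      · intro b _ hb
        have : (b : ℕ) ≠ t + i := fun h' => hb (Fin.ext h')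
        simp [this]
      · simp
    · rw [Finset.sum_eq_zero]
      · simp [h]
      · intro b _
        have : (b : ℕ) ≠ t + i := by have := b.2; omega
        simp [this]
  · rw [Finset.sum_eq_zero]
    · simp [hij]
    · intro b _
      have : (i : ℕ) ≠ j := fun h => hij (Fin.ext h)
      split_ifs <;> first | omega | simp

lemma shiftM_cross (k d : ℕ) : shiftM k d 0 * (shiftM k d k)ᵀ = 0 := by
  ext i j
  simp only [shiftM, Matrix.mul_apply, Matrix.transpose_apply, Matrix.of_apply, Matrix.zero_apply]
  refine Finset.sum_eq_zero fun b _ => ?_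
  have := i.2
  split_ifs <;> first | omega | simp

lemma sum_ite_count {d k : ℕ} (h1 : k ≤ d) (h2 : d ≤ 2 * k) (x y : ℝ) :
    ∑ j : Fin k, (if k + (j : ℕ) < d then x else y) = ((d : ℝ) - k) * x + (2 * k - d) * y := by
  obtain ⟨m, rfl⟩ := Nat.exists_eq_add_of_le h1
  obtain ⟨n, rfl⟩ := Nat.exists_eq_add_of_le (show m ≤ k by omega)
  rw [Fin.sum_univ_add]
  simp
  left
  ring

lemma test_diag {d k : ℕ} (hkd : k ≤ d) (c q p : ℝ)
    (h : ∀ A B : Matrix (Fin k) (Fin d) ℂ, 0 ≤ FF c q p (Aᴴ * B)) (s : Fin k → ℝ) :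
    0 ≤ (c + q) * ∑ j, s j ^ 2 + p * (∑ j, s j) ^ 2 := by
  have hone : (fun j : Fin k => (((if 0 + (j : ℕ) < d then 1 else 0 : ℝ)) : ℂ)) =
      fun j : Fin k => ((1 : ℝ) : ℂ) := by
    ext j
    have := j.2
    rw [if_pos (by omega)]
  have hs := shiftM_self k d 0
  rw [hone] at hs
  have h0 := h (shiftM k d 0) (Matrix.diagonal (fun j => (s j : ℂ)) * shiftM k d 0)
  rw [FF_diag c q p _ (fun _ => 1) (fun _ => 1) s (by rw [shiftM_conj]; exact hs) hs,
    Complex.zero_le_real] at h0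
  simp only [one_pow, one_mul, mul_one] at h0
  linarith

lemma test_block {d k : ℕ} (hkd : k ≤ d) (hdk : d ≤ 2 * k) (c q p : ℝ)
    (h : ∀ A B : Matrix (Fin k) (Fin d) ℂ, 0 ≤ FF c q p (Aᴴ * B)) (s r : ℝ) :
    0 ≤ c * (4 * (d - k) * s ^ 2 + (2 * k - d) * r ^ 2) + q * ((2 * k - d) * r ^ 2)
      + p * (2 * (d - k) * s + (2 * k - d) * r) ^ 2 := by
  have hone : (fun j : Fin k => (((if 0 + (j : ℕ) < d then 1 else 0 : ℝ)) : ℂ)) =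
      fun j : Fin k => ((1 : ℝ) : ℂ) := by
    ext j
    have := j.2
    rw [if_pos (by omega)]
  have hs := shiftM_self k d 0
  rw [hone] at hs
  have hs2 := shiftM_self k d k
  have hx := shiftM_cross k d
  have hx2 : shiftM k d k * (shiftM k d 0)ᵀ = 0 := by
    have := congrArg Matrix.transpose hx
    simpa using this
  set A : Matrix (Fin k) (Fin d) ℂ := shiftM k d 0 + Complex.I • shiftM k d k with hA
  have hn : A * Aᴴ = Matrix.diagonal fun j : Fin k =>
      ((if k + (j : ℕ) < d then 2 else 1 : ℝ) : ℂ) := by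
    rw [hA, Matrix.conjTranspose_add, Matrix.conjTranspose_smul, shiftM_conj, shiftM_conj]
    simp only [Matrix.add_mul, Matrix.mul_add, Matrix.smul_mul, Matrix.mul_smul, hs, hs2, hx, hx2]
    ext i j
    by_cases hij : i = j
    · subst hij
      by_cases hi : k + (i : ℕ) < d <;> simp [hi]
      norm_num
    · simp [hij]
  have hm : A * Aᵀ = Matrix.diagonal fun j : Fin k =>
      ((if k + (j : ℕ) < d then 0 else 1 : ℝ) : ℂ) := by
    rw [hA, Matrix.transpose_add, Matrix.transpose_smul]
    simp only [Matrix.add_mul, Matrix.mul_add, Matrix.smul_mul, Matrix.mul_smul, hs, hs2, hx, hx2]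
    ext i j
    by_cases hij : i = j
    · subst hij
      by_cases hi : k + (i : ℕ) < d <;> simp [hi]
    · simp [hij]
  set v : Fin k → ℝ := fun j => if k + (j : ℕ) < d then s else r with hv
  have h0 := h A (Matrix.diagonal (fun j => (v j : ℂ)) * A)
  rw [FF_diag c q p _ _ _ v hn hm, Complex.zero_le_real] at h0
  have b1 : ∀ j : Fin k, (if k + (j : ℕ) < d then 2 else 1 : ℝ) ^ 2 * v j ^ 2 =
      if k + (j : ℕ) < d then 4 * s ^ 2 else r ^ 2 := fun j => by
    simp only [hv]; split_ifs <;> ring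
  have b2 : ∀ j : Fin k, (if k + (j : ℕ) < d then 0 else 1 : ℝ) ^ 2 * v j ^ 2 =
      if k + (j : ℕ) < d then 0 else r ^ 2 := fun j => by
    simp only [hv]; split_ifs <;> ring
  have b3 : ∀ j : Fin k, v j * (if k + (j : ℕ) < d then 2 else 1 : ℝ) =
      if k + (j : ℕ) < d then 2 * s else r := fun j => by
    simp only [hv]; split_ifs <;> ring
  simp only [b1, b2, b3, sum_ite_count hkd hdk] at h0
  calc 0 ≤ _ := h0
    _ = _ := by ring

lemma test_anti {d k : ℕ} (hk : 2 ≤ k) (hkd : k ≤ d) (c q p : ℝ)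
    (h : ∀ A B : Matrix (Fin k) (Fin d) ℂ, 0 ≤ FF c q p (Aᴴ * B)) : 0 ≤ c - q := by
  obtain ⟨i, j, hij⟩ : ∃ i j : Fin k, i ≠ j := ⟨⟨0, by omega⟩, ⟨1, by omega⟩, by simp⟩
  obtain ⟨a, b, hab⟩ : ∃ a b : Fin d, a ≠ b := ⟨⟨0, by omega⟩, ⟨1, by omega⟩, by simp⟩
  have h0 := h (Matrix.single i a 1 + Matrix.single j b 1)
    (Matrix.single i b (1 : ℂ) - Matrix.single j a 1)
  have e : FF c q p ((Matrix.single i a (1 : ℂ) + Matrix.single j b 1)ᴴ *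
      (Matrix.single i b (1 : ℂ) - Matrix.single j a 1)) = ((2 * (c - q) : ℝ) : ℂ) := by
    have hM : (Matrix.single i a (1 : ℂ) + Matrix.single j b 1)ᴴ *
      (Matrix.single i b (1 : ℂ) - Matrix.single j a 1) = Matrix.single a b 1 - Matrix.single b a 1 := by
      simp [Matrix.conjTranspose_add, Matrix.add_mul, Matrix.mul_sub, Matrix.conjTranspose_single,
        hij, hij.symm]
    rw [hM]
    simp [FF, EF, Matrix.mul_sub, Matrix.sub_mul,
      Matrix.conjTranspose_single, Matrix.transpose_single, Matrix.trace_single_eq_of_ne,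
      hab, hab.symm]
    ring
  rw [e, Complex.zero_le_real] at h0
  linarith

lemma nec {d k : ℕ} (hk : 2 ≤ k) (hkd : k ≤ d) (hdk : d < 2 * k) (c q p : ℝ)
    (h : ∀ A B : Matrix (Fin k) (Fin d) ℂ, 0 ≤ FF c q p (Aᴴ * B)) :
    0 ≤ c + q ∧ 0 ≤ c - q ∧ 0 ≤ c + q + k * p ∧
      0 ≤ c * (c + q) + p * (d * q + k * (c - q)) := by
  have hk0 : (0 : ℝ) < k := by exact_mod_cast (by omega : 0 < k)
  have hd0 : (0 : ℝ) < d := by exact_mod_cast (by omega : 0 < d)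
  have h1 : 0 ≤ c + q := by
    obtain ⟨m, rfl⟩ := Nat.exists_eq_add_of_le' hk
    have := test_diag hkd c q p h (Fin.cons 1 (Fin.cons (-1) 0))
    simp [Fin.sum_univ_succ] at this
    linarith
  have h2 := test_anti hk hkd c q p h
  have h3 : 0 ≤ c + q + k * p := by
    have := test_diag hkd c q p h (fun _ => 1)
    simp at this
    have h5 : 0 ≤ (k : ℝ) * (c + q + k * p) := by nlinarith
    exact nonneg_of_mul_nonneg_right h5 hk0
  refine ⟨h1, h2, h3, ?_⟩
  have h4 := test_block hkd hdk.le c q p h (c + q) (2 * c)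
  have hN : 0 ≤ (d : ℝ) * q + k * (c - q) ∧
      ((d : ℝ) * q + k * (c - q) = 0 → c = 0 ∧ q = 0) := by
    have hdk' : (0 : ℝ) < 2 * k - d := by
      have : (d : ℝ) < 2 * k := by exact_mod_cast hdk
      linarith
    have e : 2 * ((d : ℝ) * q + k * (c - q)) = d * (c + q) + (2 * k - d) * (c - q) := by ring
    have a1 := mul_nonneg hd0.le h1
    have a2 := mul_nonneg hdk'.le h2
    refine ⟨by linarith, fun h0 => ?_⟩
    have b1 : (d : ℝ) * (c + q) = 0 := by linarith
    have b2 : (2 * k - d : ℝ) * (c - q) = 0 := by linarith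
    rcases mul_eq_zero.1 b1 with h | h
    · exact absurd h hd0.ne'
    rcases mul_eq_zero.1 b2 with h' | h'
    · exact absurd h' hdk'.ne'
    constructor <;> linarith
  rcases hN.1.eq_or_lt with h0 | h0
  · obtain ⟨rfl, rfl⟩ := hN.2 h0.symm
    simp
  · have h5 : 0 ≤ (4 * ((d : ℝ) * q + k * (c - q))) *
        (c * (c + q) + p * (d * q + k * (c - q))) := by
      calc 0 ≤ _ := h4
        _ = _ := by ring
    exact nonneg_of_mul_nonneg_right h5 (by linarith)

/-- For `d ≥ 3` and an integer `k` with `d/2 < k < d`, the map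
`L^{(d)}_{p,q}` is `k`-positive iff `p - (d-1)q ≤ 1`, `p + (d+1)q ≤ 1`,
`(kd-1)p + (d-1)q ≥ -1` and `f_k(p,q) ≤ 0`, where
`f_k(x,y) = (kd-1)x² - (d³-kd²-kd-d+2)xy + (d-1)y² - (kd-2)x - (d-2)y - 1`. -/
theorem Lmap_kPositive_iff_large {d k : ℕ} (hd : 3 ≤ d) (hk : d < 2 * k) (hkd : k < d)
    (p q : ℝ) :
    IsKPositive k (Lmap d p q) ↔
      (p - ((d : ℝ) - 1) * q ≤ 1 ∧ p + ((d : ℝ) + 1) * q ≤ 1 ∧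
        -1 ≤ ((k : ℝ) * d - 1) * p + ((d : ℝ) - 1) * q ∧
        ((k : ℝ) * d - 1) * p ^ 2
            - ((d : ℝ) ^ 3 - (k : ℝ) * d ^ 2 - (k : ℝ) * d - d + 2) * p * q
            + ((d : ℝ) - 1) * q ^ 2 - ((k : ℝ) * d - 2) * p - ((d : ℝ) - 2) * q - 1 ≤ 0) := by
  have hd0 : (0 : ℝ) < d := by exact_mod_cast (by omega : 0 < d)
  have hd2 : (0 : ℝ) < (d : ℝ) ^ 2 := by positivity
  have hmain : IsKPositive k (Lmap d p q) ↔
      (0 ≤ (1 - p - q) / d + q ∧ 0 ≤ (1 - p - q) / d - q ∧ 0 ≤ (1 - p - q) / d + q + k * p ∧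
      0 ≤ (1 - p - q) / d * ((1 - p - q) / d + q) + p * (d * q + k * ((1 - p - q) / d - q))) := by
    rw [kpos_iff]
    constructor
    · exact nec (by omega) hkd.le hk _ _ _
    · rintro ⟨h1, h2, h3, h4⟩
      exact suff (by omega) (by omega) _ _ _ h1 h2 h3 h4
  rw [hmain]
  obtain ⟨c, hc⟩ : ∃ c : ℝ, c = (1 - p - q) / d := ⟨_, rfl⟩
  rw [← hc]
  have h1 : (1 : ℝ) = d * c + p + q := by rw [hc]; field_simp; ring
  have e1 : 1 - (p - ((d : ℝ) - 1) * q) = d * (c + q) := by linear_combination h1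
  have e2 : 1 - (p + ((d : ℝ) + 1) * q) = d * (c - q) := by linear_combination h1
  have e3 : ((k : ℝ) * d - 1) * p + ((d : ℝ) - 1) * q + 1 = d * (c + q + k * p) := by
    linear_combination h1
  have e4 : -(((k : ℝ) * d - 1) * p ^ 2
            - ((d : ℝ) ^ 3 - (k : ℝ) * d ^ 2 - (k : ℝ) * d - d + 2) * p * q
            + ((d : ℝ) - 1) * q ^ 2 - ((k : ℝ) * d - 2) * p - ((d : ℝ) - 2) * q - 1) =
      (d : ℝ) ^ 2 * (c * (c + q) + p * (d * q + k * (c - q))) := by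
    have h2 : (d : ℝ) * c = 1 - p - q := by linarith
    have : (d : ℝ) ^ 2 * (c * (c + q) + p * (d * q + k * (c - q))) =
      (d * c) * (d * c + d * q) + p * d * (d ^ 2 * q + k * (d * c - d * q)) := by ring
    rw [this, h2]
    ring
  refine and_congr ?_ (and_congr ?_ (and_congr ?_ ?_))
  · rw [← mul_nonneg_iff_of_pos_left hd0, ← e1, sub_nonneg]
  · rw [← mul_nonneg_iff_of_pos_left hd0, ← e2, sub_nonneg]
  · rw [← mul_nonneg_iff_of_pos_left hd0, ← e3]
    constructor <;> intro h <;> linarith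
  · rw [← mul_nonneg_iff_of_pos_left hd2, ← e4, neg_nonneg]

end
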